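/- Let p ≥ 2 and δ ∈ (0,1). Then there exists a constant c_p > 0, depending only on p, such that for every ξ, η ∈ ℝⁿ: |𝒢_δ((|ξ| − δ − 1)_+) − 𝒢_δ((|η| − δ − 1)_+)|² ≤ c_p |H_{p/2}(ξ) − H_{p/2}(η)|². -/

import Mathlib

/-- `Hmap lam ξ = (|ξ| − 1)₊^lam • ξ/|ξ|` for `ξ ≠ 0`, and `Hmap lam 0 = 0`. -/
noncomputable def Hmap {n : ℕ} (lam : ℝ) (ξ : EuclideanSpace ℝ (Fin n)) :
    EuclideanSpace ℝ (Fin n) :=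
  open Classical in
  if ξ = (0 : EuclideanSpace ℝ (Fin n)) then 0
  else (max (‖ξ‖ - 1) 0) ^ lam • ‖ξ‖⁻¹ • ξ

/-- `Gfun p δ t = ∫₀ᵗ s(s+δ)^{(p−2)/2}/√(1+δ+s²) ds`. -/
noncomputable def Gfun (p δ t : ℝ) : ℝ :=
  ∫ s in (0:ℝ)..t, s * (s + δ) ^ ((p - 2) / 2) / Real.sqrt (1 + δ + s ^ 2)

/-!
Since `s ≤ √(1 + δ + s²)`, the integrand of `Gfun p δ` is at most `(s + δ) ^ ((p - 2) / 2)`, whose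
primitive is `(2 / p) (s + δ) ^ (p / 2)`. At the upper limit `s = (|ξ| - δ - 1)₊` one has
`s + δ = max (|ξ| - 1)₊ δ`, hence `(s + δ) ^ (p / 2) = max |H_{p/2}(ξ)| (δ ^ (p / 2))`, and both the
truncation `max · (δ ^ (p / 2))` and the norm are `1`-Lipschitz.
-/

lemma abs_mul_rpow_div_sqrt_le {δ s : ℝ} (r : ℝ) (hδ : -1 ≤ δ) (hs : 0 ≤ s + δ) :
    |s * (s + δ) ^ r / √(1 + δ + s ^ 2)| ≤ (s + δ) ^ r := by
  have hsqrt : |s| ≤ √(1 + δ + s ^ 2) := Real.abs_le_sqrt (by linarith)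
  rw [abs_div, abs_mul, abs_of_nonneg (Real.rpow_nonneg hs r), abs_of_nonneg (Real.sqrt_nonneg _)]
  refine div_le_of_le_mul₀ (Real.sqrt_nonneg _) (Real.rpow_nonneg hs r) ?_
  rw [mul_comm]
  gcongr

lemma intervalIntegrable_add_const_rpow {r : ℝ} (hr : -1 < r) (δ a b : ℝ) :
    IntervalIntegrable (fun s ↦ (s + δ) ^ r) MeasureTheory.volume a b := by
  simpa using
    (intervalIntegral.intervalIntegrable_rpow' (a := a + δ) (b := b + δ) hr).comp_add_right δ

lemma intervalIntegrable_mul_rpow_div_sqrt {r δ : ℝ} (hr : -1 < r) (hδ : -1 < δ) (a b : ℝ) :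
    IntervalIntegrable (fun s ↦ s * (s + δ) ^ r / √(1 + δ + s ^ 2)) MeasureTheory.volume a b := by
  have hsqrt (s : ℝ) : √(1 + δ + s ^ 2) ≠ 0 := (Real.sqrt_pos.2 (by linarith [sq_nonneg s])).ne'
  have hcont : Continuous fun s : ℝ ↦ s / √(1 + δ + s ^ 2) := by fun_prop (disch := exact hsqrt _)
  simpa only [div_mul_eq_mul_div] using
    (intervalIntegrable_add_const_rpow hr δ a b).continuousOn_mul hcont.continuousOn

lemma integral_add_const_rpow {r : ℝ} (hr : -1 < r) (δ a b : ℝ) :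
    ∫ s in a..b, (s + δ) ^ r = ((b + δ) ^ (r + 1) - (a + δ) ^ (r + 1)) / (r + 1) := by
  rw [intervalIntegral.integral_comp_add_right (fun u : ℝ ↦ u ^ r), integral_rpow (Or.inl hr)]

lemma abs_Gfun_sub_Gfun_le {p δ x y : ℝ} (hp : 0 < p) (hδ : -1 < δ) (hx : 0 ≤ x + δ)
    (hy : 0 ≤ y + δ) :
    |Gfun p δ x - Gfun p δ y| ≤ 2 / p * |(x + δ) ^ (p / 2) - (y + δ) ^ (p / 2)| := by
  have hr : -1 < (p - 2) / 2 := by linarith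
  have hexp : (p - 2) / 2 + 1 = p / 2 := by ring
  have hinteg := intervalIntegrable_mul_rpow_div_sqrt hr hδ 0
  calc |Gfun p δ x - Gfun p δ y|
      = |∫ s in y..x, s * (s + δ) ^ ((p - 2) / 2) / √(1 + δ + s ^ 2)| := by
        rw [← intervalIntegral.integral_interval_sub_left (hinteg x) (hinteg y), Gfun, Gfun]
    _ ≤ |∫ s in y..x, (s + δ) ^ ((p - 2) / 2)| := by
        rw [← Real.norm_eq_abs]
        refine intervalIntegral.norm_integral_le_abs_of_norm_le
          (MeasureTheory.ae_restrict_of_forall_mem measurableSet_uIoc fun s hs ↦ ?_)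
          (intervalIntegrable_add_const_rpow hr δ y x)
        have hmin : 0 ≤ min y x + δ := by rw [← min_add_add_right]; exact le_min hy hx
        exact abs_mul_rpow_div_sqrt_le _ hδ.le (by linarith [hs.1])
    _ = 2 / p * |(x + δ) ^ (p / 2) - (y + δ) ^ (p / 2)| := by
        rw [integral_add_const_rpow hr, hexp, abs_div, abs_of_pos (by positivity : 0 < p / 2)]
        field_simp

lemma norm_Hmap {n : ℕ} {q : ℝ} (hq : q ≠ 0) (ξ : EuclideanSpace ℝ (Fin n)) :
    ‖Hmap q ξ‖ = max (‖ξ‖ - 1) 0 ^ q := by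
  rcases eq_or_ne ξ 0 with rfl | hξ
  · simp [Hmap, Real.zero_rpow hq]
  · have hpow : 0 ≤ max (‖ξ‖ - 1) 0 ^ q := Real.rpow_nonneg (le_max_right _ _) q
    rw [Hmap, if_neg hξ, norm_smul, norm_smul, norm_inv, norm_norm,
      inv_mul_cancel₀ (norm_ne_zero_iff.2 hξ), mul_one, Real.norm_of_nonneg hpow]

lemma rpow_max_sub_add_eq_max_norm_Hmap {n : ℕ} {q δ : ℝ} (hq : 0 < q) (hδ : 0 ≤ δ)
    (ξ : EuclideanSpace ℝ (Fin n)) :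
    (max (‖ξ‖ - δ - 1) 0 + δ) ^ q = max ‖Hmap q ξ‖ (δ ^ q) := by
  have hshift : max (‖ξ‖ - δ - 1) 0 + δ = max (max (‖ξ‖ - 1) 0) δ := by
    rw [max_assoc, max_eq_right hδ, ← max_add_add_right, zero_add]
    ring_nf
  rw [hshift, norm_Hmap hq.ne']
  exact (Real.monotoneOn_rpow_Ici_of_exponent_nonneg hq.le).map_max
    (Set.mem_Ici.2 (le_max_right _ _)) hδ

theorem Gfun_controlled_by_Hmap_general {p δ : ℝ} (hp : 0 < p) (hδ : 0 ≤ δ) {n : ℕ}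
    (ξ η : EuclideanSpace ℝ (Fin n)) :
    |Gfun p δ (max (‖ξ‖ - δ - 1) 0) - Gfun p δ (max (‖η‖ - δ - 1) 0)| ≤
      2 / p * ‖Hmap (p / 2) ξ - Hmap (p / 2) η‖ := by
  have hq : 0 < p / 2 := by positivity
  calc _ ≤ 2 / p * |(max (‖ξ‖ - δ - 1) 0 + δ) ^ (p / 2) - (max (‖η‖ - δ - 1) 0 + δ) ^ (p / 2)| :=
        abs_Gfun_sub_Gfun_le hp (by linarith) (by positivity) (by positivity)
    _ = 2 / p * |max ‖Hmap (p / 2) ξ‖ (δ ^ (p / 2)) - max ‖Hmap (p / 2) η‖ (δ ^ (p / 2))| := by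
        simp only [rpow_max_sub_add_eq_max_norm_Hmap hq hδ]
    _ ≤ 2 / p * |‖Hmap (p / 2) ξ‖ - ‖Hmap (p / 2) η‖| := by
        gcongr 2 / p * ?_
        exact abs_max_sub_max_le_abs _ _ _
    _ ≤ 2 / p * ‖Hmap (p / 2) ξ - Hmap (p / 2) η‖ := by
        gcongr
        exact abs_norm_sub_norm_le _ _

/-- for `p ≥ 2` there is `c_p > 0`, depending only on `p`, such that for all
`δ ∈ (0,1)` and all `ξ, η ∈ ℝⁿ`:
`|𝒢_δ((|ξ|−δ−1)₊) − 𝒢_δ((|η|−δ−1)₊)|² ≤ c_p |H_{p/2}(ξ) − H_{p/2}(η)|²`. -/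
theorem Gfun_controlled_by_Hmap (p : ℝ) (hp : 2 ≤ p) :
    ∃ c : ℝ, 0 < c ∧ ∀ δ : ℝ, 0 < δ → δ < 1 →
      ∀ (n : ℕ) (ξ η : EuclideanSpace ℝ (Fin n)),
        |Gfun p δ (max (‖ξ‖ - δ - 1) 0) - Gfun p δ (max (‖η‖ - δ - 1) 0)| ^ 2 ≤
          c * ‖Hmap (p / 2) ξ - Hmap (p / 2) η‖ ^ 2 := by
  refine ⟨(2 / p) ^ 2, by positivity, fun δ hδ _ n ξ η ↦ ?_⟩
  rw [← mul_pow]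
  exact pow_le_pow_left₀ (abs_nonneg _)
    (Gfun_controlled_by_Hmap_general (by positivity) hδ.le ξ η) 2
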